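/- arXiv:2005.13777 — 9 statements merged into one kernel-verified Lean document; each statement's English description precedes it below -/
import Mathlib

section
/- For every equivalence relation E on ℕ, E is computably reducible to its computable FS-jump E⁺. -/
/-- The `e`-th partial computable function. -/
def phi (e : ℕ) : ℕ →. ℕ :=
  Nat.Partrec.Code.eval (Denumerable.ofNat Nat.Partrec.Code e)

/-- `W_e`, the `e`-th c.e. set: the domain of `φ_e`. -/
def WSet (e : ℕ) : Set ℕ := (phi e).Dom

/-- The `E`-equivalence class of `k`. -/
def classOf (E : ℕ → ℕ → Prop) (k : ℕ) : Set ℕ := {x | E k x}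

/-- Computable reducibility of binary relations on ℕ. -/
def Reduces (E F : ℕ → ℕ → Prop) : Prop :=
  ∃ f : ℕ → ℕ, Computable f ∧ ∀ m n, E m n ↔ F (f m) (f n)

/-- The computable FS-jump of `E`: `e E⁺ e'` iff the set of `E`-classes of elements
of `ran φ_e` equals the set of `E`-classes of elements of `ran φ_{e'}`. -/
def FSJump (E : ℕ → ℕ → Prop) : ℕ → ℕ → Prop :=
  fun e e' => classOf E '' (phi e).ran = classOf E '' (phi e').ran

theorem phi_const_ran (n : ℕ) :
    (phi (Encodable.encode (Nat.Partrec.Code.const n))).ran = {n} := by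
  ext x
  simp [phi, PFun.ran, Nat.Partrec.Code.eval_const, Denumerable.ofNat_encode]

/-- For every equivalence relation `E` on ℕ, `E` is computably reducible to its
computable FS-jump `E⁺`. -/
theorem reduces_jump_self (E : ℕ → ℕ → Prop) (hE : Equivalence E) :
    Reduces E (FSJump E) := by
  refine ⟨fun n => Encodable.encode (Nat.Partrec.Code.const n),
    (Primrec.encode.comp Nat.Partrec.Code.primrec_const).to_comp, fun m n => ?_⟩
  simp only [FSJump, phi_const_ran, Set.image_singleton, Set.singleton_eq_singleton_iff]
  constructor
  · intro h
    ext x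
    exact ⟨fun hx => hE.trans (hE.symm h) hx, fun hx => hE.trans h hx⟩
  · intro h
    have hn : n ∈ classOf E n := hE.refl n
    rw [← h] at hn
    exact hn
end

section
/- If an equivalence relation E on ℕ has only finitely many equivalence classes, then E < E⁺, i.e., E is computably reducible to E⁺ but E⁺ is not computably reducible to E. -/
theorem exists_phi_ran_list (l : List ℕ) : ∃ e, (phi e).ran = {x | x ∈ l} := by
  have h : Partrec (fun n : ℕ => ((l[n]? : Option ℕ) : Part ℕ)) :=
    Computable.ofOption (Primrec.list_getElem?.to_comp.comp (Computable.const l) Computable.id)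
  obtain ⟨c, hc⟩ := Nat.Partrec.Code.exists_code.1 (Partrec.nat_iff.1 h)
  refine ⟨Encodable.encode c, ?_⟩
  ext x
  simp only [phi, Denumerable.ofNat_encode, hc, PFun.ran, Set.mem_setOf_eq, Part.mem_ofOption,
    Option.mem_def]
  exact List.mem_iff_getElem?.symm

theorem classOf_eq_iff {E : ℕ → ℕ → Prop} (hE : Equivalence E) (m n : ℕ) :
    classOf E m = classOf E n ↔ E m n := by
  constructor
  · intro h
    have : n ∈ classOf E n := hE.refl n
    rw [← h] at this
    exact this
  · intro h
    ext x
    exact ⟨fun hx => hE.trans (hE.symm h) hx, fun hx => hE.trans h hx⟩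

/-- If an equivalence relation `E` on ℕ has only finitely many equivalence classes,
then `E < E⁺`: `E` is computably reducible to `E⁺` but not conversely. -/
theorem jump_strict_of_finitely_many_classes (E : ℕ → ℕ → Prop) (hE : Equivalence E)
    (hfin : (Set.range (classOf E)).Finite) :
    Reduces E (FSJump E) ∧ ¬ Reduces (FSJump E) E := by
  constructor
  · refine ⟨fun m => Encodable.encode (Nat.Partrec.Code.const m),
      (Primrec.encode.comp Nat.Partrec.Code.primrec_const).to_comp, fun m n => ?_⟩
    have hr : ∀ k, (phi (Encodable.encode (Nat.Partrec.Code.const k))).ran = {k} := by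
      intro k
      ext x
      simp [phi, PFun.ran]
    simp only [FSJump, hr, Set.image_singleton, Set.singleton_eq_singleton_iff]
    exact (classOf_eq_iff hE m n).symm
  · rintro ⟨f, -, hf⟩
    have key : ∀ S : Set (Set.range (classOf E)),
        ∃ e, classOf E '' (phi e).ran = Subtype.val '' S := by
      intro S
      have hS : (Subtype.val '' S).Finite :=
        hfin.subset (by rintro _ ⟨x, -, rfl⟩; exact x.2)
      have hsub : Subtype.val '' S ⊆ classOf E '' Set.univ := by
        rintro _ ⟨x, -, rfl⟩
        simp
      obtain ⟨T, -, hT, hTS⟩ := (Set.exists_subset_image_finite_and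
        (p := fun t => t = Subtype.val '' S)).1 ⟨_, hsub, hS, rfl⟩
      obtain ⟨e, he⟩ := exists_phi_ran_list hT.toFinset.toList
      refine ⟨e, ?_⟩
      rw [he]
      simp [hTS]
    choose e he using key
    refine Function.cantor_injective
      (fun S : Set (Set.range (classOf E)) =>
        (⟨classOf E (f (e S)), Set.mem_range_self _⟩ : Set.range (classOf E))) ?_
    intro S S' h
    have h1 := (hf _ _).2 ((classOf_eq_iff hE _ _).1 (Subtype.ext_iff.1 h))
    simp only [FSJump, he] at h1
    exact Subtype.val_injective.image_injective h1
end

section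
/- For any equivalence relations E and F on ℕ, the computable FS-jump (E ⊕ F)⁺ of the disjoint sum is computably bireducible with the product E⁺ × F⁺ of the jumps. -/
/-- The disjoint sum `E ⊕ F`, with `ℕ × {0,1}` identified with ℕ via
`(m,0) ↦ 2*m` and `(m,1) ↦ 2*m+1`. -/
def dsum (E F : ℕ → ℕ → Prop) : ℕ → ℕ → Prop :=
  fun a b => (a % 2 = 0 ∧ b % 2 = 0 ∧ E (a / 2) (b / 2)) ∨
    (a % 2 = 1 ∧ b % 2 = 1 ∧ F (a / 2) (b / 2))

/-- The product `E × F`, with `ℕ × ℕ` identified with ℕ via the pairing bijection. -/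
def prodRel (E F : ℕ → ℕ → Prop) : ℕ → ℕ → Prop :=
  fun a b => E (Nat.unpair a).1 (Nat.unpair b).1 ∧ F (Nat.unpair a).2 (Nat.unpair b).2

theorem smn_phi (g : ℕ → ℕ →. ℕ) (hg : Partrec₂ g) :
    ∃ f : ℕ → ℕ, Computable f ∧ ∀ e, phi (f e) = g e := by
  obtain ⟨c, hc⟩ := Nat.Partrec.Code.exists_code.1 (Partrec.nat_iff.1
    (Partrec₂.unpaired.2 hg))
  refine ⟨fun e => Encodable.encode (Nat.Partrec.Code.curry c e), ?_, ?_⟩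
  · exact (Primrec.encode.comp (Nat.Partrec.Code.primrec₂_curry.comp
      (Primrec.const c) Primrec.id)).to_comp
  · intro e
    funext x
    simp [phi, Nat.Partrec.Code.eval_curry, hc, Nat.unpaired]

theorem phi_part : Partrec₂ phi :=
  Nat.Partrec.Code.eval_part.comp₂
    ((Computable.ofNat Nat.Partrec.Code).comp Computable.fst) Computable.snd

theorem classOf_eq {E : ℕ → ℕ → Prop} (hE : Equivalence E) (a b : ℕ) :
    classOf E a = classOf E b ↔ E a b := by
  constructor
  · intro h
    have : b ∈ classOf E b := hE.refl b
    rw [← h] at this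
    exact this
  · intro h
    ext x
    exact ⟨fun hx => hE.trans (hE.symm h) hx, fun hx => hE.trans h hx⟩

theorem image_eq_iff {E : ℕ → ℕ → Prop} (hE : Equivalence E) (A B : Set ℕ) :
    classOf E '' A = classOf E '' B ↔
      (∀ a ∈ A, ∃ b ∈ B, E a b) ∧ (∀ b ∈ B, ∃ a ∈ A, E b a) := by
  constructor
  · intro h
    constructor
    · intro a ha
      have : classOf E a ∈ classOf E '' B := h ▸ ⟨a, ha, rfl⟩
      obtain ⟨b, hb, hab⟩ := this
      exact ⟨b, hb, (classOf_eq hE _ _).1 hab.symm⟩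
    · intro a ha
      have : classOf E a ∈ classOf E '' A := h ▸ ⟨a, ha, rfl⟩
      obtain ⟨b, hb, hab⟩ := this
      exact ⟨b, hb, (classOf_eq hE _ _).1 hab.symm⟩
  · rintro ⟨h1, h2⟩
    ext s
    constructor
    · rintro ⟨a, ha, rfl⟩
      obtain ⟨b, hb, hab⟩ := h1 a ha
      exact ⟨b, hb, ((classOf_eq hE _ _).2 hab).symm⟩
    · rintro ⟨a, ha, rfl⟩
      obtain ⟨b, hb, hab⟩ := h2 a ha
      exact ⟨b, hb, ((classOf_eq hE _ _).2 hab).symm⟩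

theorem dsum_equiv {E F : ℕ → ℕ → Prop} (hE : Equivalence E) (hF : Equivalence F) :
    Equivalence (dsum E F) := by
  refine ⟨?_, ?_, ?_⟩
  · intro x
    rcases Nat.mod_two_eq_zero_or_one x with h | h
    · exact Or.inl ⟨h, h, hE.refl _⟩
    · exact Or.inr ⟨h, h, hF.refl _⟩
  · rintro x y (⟨h, h', k⟩ | ⟨h, h', k⟩)
    · exact Or.inl ⟨h', h, hE.symm k⟩
    · exact Or.inr ⟨h', h, hF.symm k⟩
  · rintro x y z (⟨h, h', k⟩ | ⟨h, h', k⟩) (⟨l, l', m⟩ | ⟨l, l', m⟩)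
    · exact Or.inl ⟨h, l', hE.trans k m⟩
    · omega
    · omega
    · exact Or.inr ⟨h, l', hF.trans k m⟩

theorem half_iff (E F : ℕ → ℕ → Prop) (A B : Set ℕ) :
    (∀ a ∈ A, ∃ b ∈ B, dsum E F a b) ↔
      (∀ a ∈ {m | 2 * m ∈ A}, ∃ b ∈ {m | 2 * m ∈ B}, E a b) ∧
      (∀ a ∈ {m | 2 * m + 1 ∈ A}, ∃ b ∈ {m | 2 * m + 1 ∈ B}, F a b) := by
  constructor
  · intro h
    constructor
    · intro a ha
      obtain ⟨b, hb, (⟨h1, h2, h3⟩ | ⟨h1, h2, h3⟩)⟩ := h _ ha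
      · refine ⟨b / 2, ?_, ?_⟩
        · have : 2 * (b / 2) = b := by omega
          simpa [this] using hb
        · have : 2 * a / 2 = a := by omega
          rwa [this] at h3
      · omega
    · intro a ha
      obtain ⟨b, hb, (⟨h1, h2, h3⟩ | ⟨h1, h2, h3⟩)⟩ := h _ ha
      · omega
      · refine ⟨b / 2, ?_, ?_⟩
        · have : 2 * (b / 2) + 1 = b := by omega
          simpa [this] using hb
        · have : (2 * a + 1) / 2 = a := by omega
          rwa [this] at h3
  · rintro ⟨h1, h2⟩ a ha
    rcases Nat.mod_two_eq_zero_or_one a with h | h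
    · have e : 2 * (a / 2) = a := by omega
      obtain ⟨b, hb, hab⟩ := h1 (a / 2) (by simpa [e] using ha)
      refine ⟨2 * b, hb, Or.inl ⟨h, by omega, ?_⟩⟩
      have : 2 * b / 2 = b := by omega
      rwa [this]
    · have e : 2 * (a / 2) + 1 = a := by omega
      obtain ⟨b, hb, hab⟩ := h2 (a / 2) (by simpa [e] using ha)
      refine ⟨2 * b + 1, hb, Or.inr ⟨h, by omega, ?_⟩⟩
      have : (2 * b + 1) / 2 = b := by omega
      rwa [this]

theorem key {E F : ℕ → ℕ → Prop} (hE : Equivalence E) (hF : Equivalence F) (A B : Set ℕ) :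
    classOf (dsum E F) '' A = classOf (dsum E F) '' B ↔
      classOf E '' {m | 2 * m ∈ A} = classOf E '' {m | 2 * m ∈ B} ∧
      classOf F '' {m | 2 * m + 1 ∈ A} = classOf F '' {m | 2 * m + 1 ∈ B} := by
  rw [image_eq_iff (dsum_equiv hE hF), image_eq_iff hE, image_eq_iff hF, half_iff, half_iff]
  tauto

theorem exists_part (i : ℕ) (hi : i < 2) : ∃ f : ℕ → ℕ, Computable f ∧
    ∀ e, (phi (f e)).ran = {m | 2 * m + i ∈ (phi e).ran} := by
  obtain ⟨f, hf, h⟩ := smn_phi (fun e x => (phi e x).bind fun y =>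
      ((if y % 2 = i then some (y / 2) else none : Option ℕ) : Part ℕ)) (by
    refine Partrec.bind phi_part ?_
    refine Computable.ofOption ?_
    refine Primrec.to_comp ?_
    refine Primrec.ite ?_ ?_ (Primrec.const _)
    · exact Primrec.eq.comp (Primrec.nat_mod.comp Primrec.snd (Primrec.const 2)) (Primrec.const i)
    · exact Primrec.option_some.comp (Primrec.nat_div.comp Primrec.snd (Primrec.const 2)))
  refine ⟨f, hf, fun e => ?_⟩
  rw [h]
  ext m
  simp only [PFun.ran, Set.mem_setOf_eq, Part.mem_bind_iff, Part.mem_ofOption]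
  constructor
  · rintro ⟨x, y, hy, hm⟩
    refine ⟨x, ?_⟩
    split_ifs at hm with hc
    · simp at hm
      have : 2 * m + i = y := by omega
      rwa [this]
    · simp at hm
  · rintro ⟨x, hx⟩
    refine ⟨x, _, hx, ?_⟩
    rw [if_pos (by omega)]
    simp
    omega

theorem exists_join : ∃ f : ℕ → ℕ, Computable f ∧ ∀ a,
    {m | 2 * m ∈ (phi (f a)).ran} = (phi (Nat.unpair a).1).ran ∧
    {m | 2 * m + 1 ∈ (phi (f a)).ran} = (phi (Nat.unpair a).2).ran := by
  obtain ⟨f, hf, h⟩ := smn_phi (fun a x =>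
      (phi (if x % 2 = 0 then (Nat.unpair a).1 else (Nat.unpair a).2) (x / 2)).map
        fun y => 2 * y + x % 2) (by
    refine Partrec.map (phi_part.comp (Primrec.to_comp ?_) (Primrec.to_comp ?_))
      (Primrec.to_comp ?_)
    · refine Primrec.ite ?_ ?_ ?_
      · exact Primrec.eq.comp (Primrec.nat_mod.comp Primrec.snd (Primrec.const 2))
          (Primrec.const 0)
      · exact Primrec.fst.comp (Primrec.unpair.comp Primrec.fst)
      · exact Primrec.snd.comp (Primrec.unpair.comp Primrec.fst)
    · exact Primrec.nat_div.comp Primrec.snd (Primrec.const 2)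
    · exact Primrec.nat_add.comp (Primrec.nat_mul.comp (Primrec.const 2) Primrec.snd)
        (Primrec.nat_mod.comp (Primrec.snd.comp Primrec.fst) (Primrec.const 2)))
  refine ⟨f, hf, fun a => ?_⟩
  rw [h]
  constructor
  · ext m
    simp only [PFun.ran, Set.mem_setOf_eq, Part.mem_map_iff]
    constructor
    · rintro ⟨x, y, hy, hm⟩
      rw [if_pos (by omega)] at hy
      have : y = m := by omega
      exact ⟨_, this ▸ hy⟩
    · rintro ⟨x, hx⟩
      refine ⟨2 * x, m, ?_, by omega⟩
      rw [if_pos (by omega)]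
      have : 2 * x / 2 = x := by omega
      rwa [this]
  · ext m
    simp only [PFun.ran, Set.mem_setOf_eq, Part.mem_map_iff]
    constructor
    · rintro ⟨x, y, hy, hm⟩
      rw [if_neg (by omega)] at hy
      have : y = m := by omega
      exact ⟨_, this ▸ hy⟩
    · rintro ⟨x, hx⟩
      refine ⟨2 * x + 1, m, ?_, by omega⟩
      rw [if_neg (by omega)]
      have : (2 * x + 1) / 2 = x := by omega
      rwa [this]

/-- `(E ⊕ F)⁺` is computably bireducible with `E⁺ × F⁺`. -/
theorem jump_dsum_bireducible_prod_jump (E F : ℕ → ℕ → Prop)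
    (hE : Equivalence E) (hF : Equivalence F) :
    Reduces (FSJump (dsum E F)) (prodRel (FSJump E) (FSJump F)) ∧
      Reduces (prodRel (FSJump E) (FSJump F)) (FSJump (dsum E F)) := by
  constructor
  · obtain ⟨f, hf, h⟩ := exists_part 0 (by omega)
    obtain ⟨g, hg, k⟩ := exists_part 1 (by omega)
    refine ⟨fun e => Nat.pair (f e) (g e), ?_, ?_⟩
    · exact (Primrec₂.natPair.to_comp).comp hf hg
    · intro m n
      simp only [prodRel, FSJump, Nat.unpair_pair, h, k, add_zero]
      exact key hE hF _ _
  · obtain ⟨f, hf, h⟩ := exists_join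
    refine ⟨f, hf, fun m n => ?_⟩
    simp only [prodRel, FSJump]
    rw [key hE hF, (h m).1, (h m).2, (h n).1, (h n).2]
end

section
/- Let P ⊆ ℕ be Π⁰₄, i.e., there is a computable predicate R ⊆ ℕ⁵ such that P(n) ⟺ ∀p ∃q ∀m ∃s R(p,q,m,s,n). Then there exist e₀ ∈ ℕ and a total computable function h : ℕ → ℕ such that for all n: P(n) holds if and only if h(n) (=^{ce})⁺ e₀, and moreover h(n) ⊆_{=^{ce}} e₀ for all n. -/
/-- Equality of c.e. sets: `e =^{ce} e'` iff `W_e = W_{e'}`. -/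
def eqCE : ℕ → ℕ → Prop := fun e e' => WSet e = WSet e'

/-- `e ⊆_E e'`: every element of `ran φ_e` is `E`-equivalent to some element
of `ran φ_{e'}`. -/
def subE (E : ℕ → ℕ → Prop) (e e' : ℕ) : Prop :=
  ∀ k ∈ (phi e).ran, ∃ m ∈ (phi e').ran, E k m

open Nat.Partrec (Code)

/-- The membership test for the sets of the family. -/
def famTest (R : ℕ × ℕ × ℕ × ℕ × ℕ → Bool) (n i x m s : ℕ) : Bool :=
  decide (x.unpair.1 = i.unpair.1) &&
    bif decide (i.unpair.2.unpair.1 = 0) then decide (m < i.unpair.2.unpair.2)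
    else R (i.unpair.1, i.unpair.2.unpair.2, m, s, n)

/-- The sets of the family. -/
def famSet (R : ℕ × ℕ × ℕ × ℕ × ℕ → Bool) (n i : ℕ) : Set ℕ :=
  {x | ∀ m, m < x.unpair.2 + 1 → ∃ s, famTest R n i x m s = true}

theorem famTest_computable (R : ℕ × ℕ × ℕ × ℕ × ℕ → Bool) (hR : Computable R) :
    Computable (fun a : (ℕ × ℕ × ℕ) × ℕ × ℕ =>
      famTest R a.1.1 a.1.2.1 a.1.2.2 a.2.1 a.2.2) := by
  have hn : Computable (fun a : (ℕ × ℕ × ℕ) × ℕ × ℕ => a.1.1) :=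
    Computable.fst.comp Computable.fst
  have hi : Computable (fun a : (ℕ × ℕ × ℕ) × ℕ × ℕ => a.1.2.1) :=
    Computable.fst.comp (Computable.snd.comp Computable.fst)
  have hx : Computable (fun a : (ℕ × ℕ × ℕ) × ℕ × ℕ => a.1.2.2) :=
    Computable.snd.comp (Computable.snd.comp Computable.fst)
  have hm : Computable (fun a : (ℕ × ℕ × ℕ) × ℕ × ℕ => a.2.1) :=
    Computable.fst.comp Computable.snd
  have hs : Computable (fun a : (ℕ × ℕ × ℕ) × ℕ × ℕ => a.2.2) :=
    Computable.snd.comp Computable.snd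
  have hu1 : Computable (fun a : ℕ => a.unpair.1) := Computable.fst.comp Computable.unpair
  have hu2 : Computable (fun a : ℕ => a.unpair.2) := Computable.snd.comp Computable.unpair
  have heq : Computable₂ (fun a b : ℕ => decide (a = b)) := by
    have h : PrimrecRel (fun a b : ℕ => a = b) := Primrec.eq
    exact Primrec₂.to_comp h.decide
  have hlt : Computable₂ (fun a b : ℕ => decide (a < b)) := by
    have h : PrimrecRel (fun a b : ℕ => a < b) := Primrec.nat_lt
    exact Primrec₂.to_comp h.decide
  have hp := hu1.comp hi
  have hb := hu1.comp (hu2.comp hi)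
  have hq := hu2.comp (hu2.comp hi)
  have hand : Computable₂ (fun a b : Bool => a && b) := Primrec.and.to_comp
  unfold famTest
  refine hand.comp (heq.comp (hu1.comp hx) hp) ?_
  refine Computable.cond (heq.comp hb (Computable.const 0)) (hlt.comp hm hq) ?_
  exact hR.comp (hp.pair (hq.pair (hm.pair (hs.pair hn))))

/-- Semi-decision procedure for the sets of the family. -/
def famFun (R : ℕ × ℕ × ℕ × ℕ × ℕ → Bool) (a : ℕ × ℕ × ℕ) : Part ℕ :=
  Nat.rec (Part.some 0) (fun m IH => IH.bind fun _ =>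
    Nat.rfind (fun s => Part.some (famTest R a.1 a.2.1 a.2.2 m s))) (a.2.2.unpair.2 + 1)

theorem step_partrec {α : Type} [Primcodable α] (T : α → ℕ → ℕ → Bool)
    (hT : Computable (fun a : α × ℕ × ℕ => T a.1 a.2.1 a.2.2)) :
    Partrec₂ (fun (a : α) (y : ℕ × ℕ) =>
      Nat.rfind (fun s => Part.some (T a y.1 s))) := by
  have h0 : Computable (fun a : (α × (ℕ × ℕ)) × ℕ => (a.1.1, a.1.2.1, a.2)) :=
    (Computable.fst.comp Computable.fst).pair
      ((Computable.fst.comp (Computable.snd.comp Computable.fst)).pair Computable.snd)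
  have h : Computable (fun a : (α × (ℕ × ℕ)) × ℕ => T a.1.1 a.1.2.1 a.2) :=
    hT.comp h0
  have h2 : Partrec₂ (fun (a : α × (ℕ × ℕ)) (s : ℕ) =>
      Part.some (T a.1 a.2.1 s)) := h.partrec
  have h3 : Partrec (fun a : α × (ℕ × ℕ) =>
      Nat.rfind (fun s => Part.some (T a.1 a.2.1 s))) := Partrec.rfind h2
  exact h3.to₂

theorem famLen_computable : Computable (fun a : ℕ × ℕ × ℕ => a.2.2.unpair.2 + 1) := by
  have h : Computable (fun a : ℕ × ℕ × ℕ => a.2.2) := Computable.snd.comp Computable.snd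
  have h2 : Computable (fun a : ℕ × ℕ × ℕ => a.2.2.unpair.2) :=
    Computable.snd.comp (Computable.unpair.comp h)
  exact Computable.succ.comp h2

theorem rec_partrec {α : Type} [Primcodable α] (T : α → ℕ → ℕ → Bool)
    (hT : Computable (fun a : α × ℕ × ℕ => T a.1 a.2.1 a.2.2))
    (len : α → ℕ) (hlen : Computable len) :
    Partrec (fun a : α => (Nat.rec (Part.some 0) (fun m IH => IH.bind fun _ =>
      Nat.rfind (fun s => Part.some (T a m s))) (len a) : Part ℕ)) := by
  have hg : Partrec (fun _ : α => Part.some 0) := (Computable.const 0).partrec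
  exact Partrec.nat_rec hlen hg (step_partrec T hT)

theorem famFun_partrec (R : ℕ × ℕ × ℕ × ℕ × ℕ → Bool) (hR : Computable R) :
    Partrec (famFun R) := by
  have hT := famTest_computable R hR
  have hlen := famLen_computable
  unfold famFun
  generalize hl : (fun a : ℕ × ℕ × ℕ => a.2.2.unpair.2 + 1) = len at hlen
  have key := rec_partrec (fun (a : ℕ × ℕ × ℕ) m s => famTest R a.1 a.2.1 a.2.2 m s) hT len hlen
  subst hl
  exact key

theorem famFun_dom (R : ℕ × ℕ × ℕ × ℕ × ℕ → Bool) (n i x : ℕ) :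
    (famFun R (n, i, x)).Dom ↔ x ∈ famSet R n i := by
  have key : ∀ k, (Nat.rec (motive := fun _ => Part ℕ) (Part.some 0) (fun m IH => IH.bind fun _ =>
      Nat.rfind (fun s => Part.some (famTest R n i x m s))) k).Dom ↔
      ∀ m, m < k → ∃ s, famTest R n i x m s = true := by
    intro k
    induction k with
    | zero => simp
    | succ k ih =>
      have hf : (Nat.rfind (fun s => Part.some (famTest R n i x k s))).Dom ↔
          ∃ s, famTest R n i x k s = true := by
        refine (Nat.rfind_dom (p := fun s => Part.some (famTest R n i x k s))).trans ?_
        constructor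
        · rintro ⟨s, hs, -⟩
          exact ⟨s, (Part.mem_some_iff.mp hs).symm⟩
        · rintro ⟨s, hs⟩
          exact ⟨s, Part.mem_some_iff.mpr hs.symm, fun _ => trivial⟩
      constructor
      · rintro ⟨h1, h2⟩ m hm
        rcases Nat.lt_succ_iff_lt_or_eq.mp hm with h | rfl
        · exact ih.mp h1 m h
        · exact hf.mp h2
      · intro h
        exact ⟨ih.mpr fun m hm => h m (by omega), hf.mpr (h k (by omega))⟩
  exact key (x.unpair.2 + 1)

/-- The uniform enumeration of the family. -/
theorem fam_index (R : ℕ × ℕ × ℕ × ℕ × ℕ → Bool) (hR : Computable R) :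
    ∃ h : ℕ → ℕ, Computable h ∧ ∀ n, WSet '' (phi (h n)).ran = Set.range (famSet R n) := by
  have hF : Nat.Partrec (fun y : ℕ => famFun R (y.unpair.1.unpair.1, y.unpair.1.unpair.2,
      y.unpair.2)) := by
    refine Partrec.nat_iff.mp ?_
    have hu1 : Computable (fun a : ℕ => a.unpair.1) := Computable.fst.comp Computable.unpair
    have hu2 : Computable (fun a : ℕ => a.unpair.2) := Computable.snd.comp Computable.unpair
    exact (famFun_partrec R hR).comp
      ((hu1.comp hu1).pair ((hu2.comp hu1).pair hu2))
  obtain ⟨c, hc⟩ := Code.exists_code.mp hF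
  have hg : Computable (fun y : ℕ => Encodable.encode (Code.curry c y)) :=
    Computable.encode.comp
      ((Code.primrec₂_curry.to_comp).comp (Computable.const c) Computable.id)
  obtain ⟨d, hd⟩ := Code.exists_code.mp (Partrec.nat_iff.mp hg.partrec)
  refine ⟨fun n => Encodable.encode (Code.curry d n), Computable.encode.comp
      ((Code.primrec₂_curry.to_comp).comp (Computable.const d) Computable.id), fun n => ?_⟩
  have hW : ∀ n i, WSet (Encodable.encode (Code.curry c (Nat.pair n i))) = famSet R n i := by
    intro n i
    ext x
    rw [← famFun_dom]
    simp only [WSet, phi, PFun.mem_dom, Denumerable.ofNat_encode, Code.eval_curry, hc,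
      Nat.unpair_pair, Part.dom_iff_mem]
  have hran : (phi (Encodable.encode (Code.curry d n))).ran =
      Set.range (fun i => Encodable.encode (Code.curry c (Nat.pair n i))) := by
    ext y
    simp only [PFun.ran, phi, Set.mem_ofPred_eq, Denumerable.ofNat_encode, Code.eval_curry, hd,
      Set.mem_range, PFun.coe_val, Part.mem_some_iff]
    exact exists_congr fun _ => eq_comm
  rw [hran, ← Set.range_comp]
  congr 1
  funext i
  exact hW n i

theorem FSJump_eqCE_iff (a b : ℕ) :
    FSJump eqCE a b ↔ WSet '' (phi a).ran = WSet '' (phi b).ran := by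
  have h : ∀ a b : ℕ, classOf eqCE '' (phi a).ran ⊆ classOf eqCE '' (phi b).ran ↔
      WSet '' (phi a).ran ⊆ WSet '' (phi b).ran := by
    intro a b
    rw [Set.image_subset_iff, Set.image_subset_iff]
    simp only [Set.subset_def, Set.mem_preimage, Set.mem_image]
    refine forall_congr' fun x => imp_congr_right fun _ => exists_congr fun y =>
      and_congr_right fun _ => ?_
    constructor
    · intro h
      have : y ∈ classOf eqCE y := rfl
      rw [h] at this
      exact this.symm
    · intro h
      ext z
      simp only [classOf, eqCE, Set.mem_ofPred_eq, h]
  simp only [FSJump, Set.Subset.antisymm_iff, h]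

theorem subE_eqCE_iff (a b : ℕ) :
    subE eqCE a b ↔ WSet '' (phi a).ran ⊆ WSet '' (phi b).ran := by
  rw [Set.image_subset_iff]
  simp only [Set.subset_def, Set.mem_preimage, Set.mem_image, subE, eqCE]
  refine forall_congr' fun x => imp_congr_right fun _ => exists_congr fun y =>
      and_congr_right fun _ => eq_comm

theorem mem_famSet_zero (R : ℕ × ℕ × ℕ × ℕ × ℕ → Bool) (n p q x : ℕ) :
    x ∈ famSet R n (Nat.pair p (Nat.pair 0 q)) ↔ x.unpair.1 = p ∧ x.unpair.2 < q := by
  simp only [famSet, famTest, Set.mem_ofPred_eq, Nat.unpair_pair]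
  simp only [decide_true, cond_true, Bool.and_eq_true, decide_eq_true_eq, exists_const]
  constructor
  · intro h
    exact h _ (Nat.lt_succ_self _)
  · rintro ⟨h1, h2⟩ m hm
    exact ⟨h1, by omega⟩

theorem mem_famSet_succ (R : ℕ × ℕ × ℕ × ℕ × ℕ → Bool) (n p b q x : ℕ) :
    x ∈ famSet R n (Nat.pair p (Nat.pair (b + 1) q)) ↔
      x.unpair.1 = p ∧ ∀ m ≤ x.unpair.2, ∃ s, R (p, q, m, s, n) = true := by
  simp only [famSet, famTest, Set.mem_ofPred_eq, Nat.unpair_pair]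
  simp only [Nat.succ_ne_zero, decide_false, cond_false, Bool.and_eq_true, decide_eq_true_eq,
    exists_and_left, Nat.lt_succ_iff]
  constructor
  · intro h
    exact ⟨(h 0 (Nat.zero_le _)).1, fun m hm => (h m hm).2⟩
  · rintro ⟨h1, h2⟩ m hm
    exact ⟨h1, h2 m hm⟩

theorem exists_pair3 (i : ℕ) : ∃ p b q, i = Nat.pair p (Nat.pair b q) :=
  ⟨i.unpair.1, i.unpair.2.unpair.1, i.unpair.2.unpair.2, by simp⟩

theorem fam_subset (R : ℕ × ℕ × ℕ × ℕ × ℕ → Bool) (n : ℕ) :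
    Set.range (famSet R n) ⊆ Set.range (famSet (fun _ => true) 0) := by
  classical
  rintro _ ⟨i, rfl⟩
  obtain ⟨p, b, q, rfl⟩ := exists_pair3 i
  rcases b with _ | b
  · refine ⟨Nat.pair p (Nat.pair 0 q), ?_⟩
    ext x
    simp only [mem_famSet_zero]
  · by_cases hall : ∀ m, ∃ s, R (p, q, m, s, n) = true
    · refine ⟨Nat.pair p (Nat.pair 1 q), ?_⟩
      ext x
      rw [mem_famSet_succ, mem_famSet_succ]
      simp [hall]
    · have hex : ∃ m, ¬ ∃ s, R (p, q, m, s, n) = true := not_forall.mp hall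
      refine ⟨Nat.pair p (Nat.pair 0 (Nat.find hex)), ?_⟩
      ext x
      rw [mem_famSet_succ, mem_famSet_zero]
      refine and_congr_right fun _ => ?_
      rw [Nat.lt_find_iff]
      simp only [not_not]

theorem fam_eq_iff (R : ℕ × ℕ × ℕ × ℕ × ℕ → Bool) (n : ℕ) :
    Set.range (famSet R n) = Set.range (famSet (fun _ => true) 0) ↔
      ∀ p, ∃ q, ∀ m, ∃ s, R (p, q, m, s, n) = true := by
  constructor
  · intro h p
    have hmem : famSet (fun _ => true) 0 (Nat.pair p (Nat.pair 1 0)) ∈ Set.range (famSet R n) := by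
      rw [h]
      exact ⟨_, rfl⟩
    obtain ⟨i, hi⟩ := hmem
    obtain ⟨p', b, q, rfl⟩ := exists_pair3 i
    have hin : ∀ m, Nat.pair p m ∈ famSet R n (Nat.pair p' (Nat.pair b q)) := by
      intro m
      rw [hi, mem_famSet_succ]
      simp
    rcases b with _ | b
    · have := hin q
      rw [mem_famSet_zero] at this
      simp at this
    · refine ⟨q, fun m => ?_⟩
      have := hin m
      rw [mem_famSet_succ, Nat.unpair_pair] at this
      obtain ⟨h1, h2⟩ := this
      simp only at h1 h2
      subst h1
      exact h2 m le_rfl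
  · intro h
    refine Set.Subset.antisymm (fam_subset R n) ?_
    rintro _ ⟨i, rfl⟩
    obtain ⟨p, b, q, rfl⟩ := exists_pair3 i
    rcases b with _ | b
    · refine ⟨Nat.pair p (Nat.pair 0 q), ?_⟩
      ext x
      simp only [mem_famSet_zero]
    · obtain ⟨qq, hqq⟩ := h p
      refine ⟨Nat.pair p (Nat.pair 1 qq), ?_⟩
      ext x
      rw [mem_famSet_succ, mem_famSet_succ]
      simp [hqq]

/-- If `P ⊆ ℕ` is `Π⁰₄`, then there are `e₀` and a computable `h` with
`P n ↔ h n (=^{ce})⁺ e₀`, and `h n ⊆_{=^{ce}} e₀` for all `n`. -/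
theorem pi04_reducible_to_jump_eqCE (P : Set ℕ)
    (R : ℕ × ℕ × ℕ × ℕ × ℕ → Bool) (hR : Computable R)
    (hP : ∀ n, n ∈ P ↔ ∀ p, ∃ q, ∀ m, ∃ s, R (p, q, m, s, n) = true) :
    ∃ e₀ : ℕ, ∃ h : ℕ → ℕ, Computable h ∧
      (∀ n, n ∈ P ↔ FSJump eqCE (h n) e₀) ∧ (∀ n, subE eqCE (h n) e₀) := by
  obtain ⟨h, hc, hh⟩ := fam_index R hR
  obtain ⟨k, -, hk⟩ := fam_index (fun _ => true) (Computable.const true)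
  refine ⟨k 0, h, hc, fun n => ?_, fun n => ?_⟩
  · rw [hP, FSJump_eqCE_iff, hh, hk, fam_eq_iff]
  · rw [subE_eqCE_iff, hh, hk]
    exact fam_subset R n
end

section
/- If E is a ceer, then E⁺ is computably reducible to =^{ce}. In fact, there is a total computable f : ℕ → ℕ witnessing E⁺ ≤ =^{ce} such that W_{f(e)} is E-invariant for every e, and there is a total computable g : ℕ → ℕ such that for all e, e' with W_e and W_{e'} both E-invariant: W_e = W_{e'} if and only if g(e) E⁺ g(e'). -/
/-- A ceer: an equivalence relation on ℕ which is c.e. as a set of pairs. -/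
def Ceer (E : ℕ → ℕ → Prop) : Prop :=
  Equivalence E ∧ ∃ e : ℕ, ∀ m n : ℕ, E m n ↔ Nat.pair m n ∈ WSet e

/-- `W` is `E`-invariant: a union of `E`-classes. -/
def EInvariant (E : ℕ → ℕ → Prop) (W : Set ℕ) : Prop :=
  ∀ m n, E m n → m ∈ W → n ∈ W

open Nat.Partrec (Code) in
theorem phi_smn {F : ℕ → ℕ →. ℕ} (hF : Partrec₂ F) :
    ∃ f : ℕ → ℕ, Computable f ∧ ∀ e, phi (f e) = F e := by
  have h1 : Partrec (fun n : ℕ => F n.unpair.1 n.unpair.2) :=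
    hF.comp (Computable.fst.comp Computable.unpair) (Computable.snd.comp Computable.unpair)
  obtain ⟨c, hc⟩ := Code.exists_code.1 (Partrec.nat_iff.1 h1)
  refine ⟨fun e => Encodable.encode (Code.curry c e), ?_, ?_⟩
  · exact Computable.encode.comp
      ((Code.primrec₂_curry.comp (Primrec.const c) Primrec.id).to_comp)
  · intro e
    funext x
    simp [phi, Code.eval_curry, hc]

open Nat.Partrec (Code) in
theorem saturation_partrec (c : Code) :
    Partrec₂ (fun e x : ℕ => Nat.rfindOpt fun s : ℕ =>
      (Code.evaln s.unpair.1 (Denumerable.ofNat Code e) s.unpair.2.unpair.1).bind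
        fun k => Code.evaln s.unpair.2.unpair.2 c (Nat.pair k x)) := by
  refine Partrec.rfindOpt (f := fun (p : ℕ × ℕ) (s : ℕ) =>
      (Code.evaln s.unpair.1 (Denumerable.ofNat Code p.1) s.unpair.2.unpair.1).bind
        fun k => Code.evaln s.unpair.2.unpair.2 c (Nat.pair k p.2)) ?_
  refine Primrec.to_comp ?_
  have u : Primrec (fun q : (ℕ × ℕ) × ℕ => q.2.unpair) := Primrec.unpair.comp Primrec.snd
  have u2 : Primrec (fun q : (ℕ × ℕ) × ℕ => q.2.unpair.2.unpair) :=
    Primrec.unpair.comp (Primrec.snd.comp u)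
  refine Primrec.option_bind ?_ ?_
  · exact Code.primrec_evaln.comp (Primrec.pair (Primrec.pair (Primrec.fst.comp u)
      ((Primrec.ofNat Code).comp (Primrec.fst.comp Primrec.fst))) (Primrec.fst.comp u2))
  · exact Code.primrec_evaln.comp (Primrec.pair (Primrec.pair
      (Primrec.snd.comp (u2.comp Primrec.fst)) (Primrec.const c))
      (Primrec₂.natPair.comp Primrec.snd (Primrec.snd.comp (Primrec.fst.comp Primrec.fst))))

open Nat.Partrec (Code) in
theorem exists_saturation (E : ℕ → ℕ → Prop) (hE : Ceer E) :
    ∃ f : ℕ → ℕ, Computable f ∧ ∀ e x, x ∈ WSet (f e) ↔ ∃ k ∈ (phi e).ran, E k x := by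
  obtain ⟨-, c, hc⟩ := hE
  obtain ⟨f, hf, hfe⟩ := phi_smn (saturation_partrec (Denumerable.ofNat Code c))
  refine ⟨f, hf, fun e x => ?_⟩
  have h0 : x ∈ WSet (f e) ↔ (phi (f e) x).Dom := Iff.rfl
  rw [h0, hfe, Nat.rfindOpt_dom]
  constructor
  · rintro ⟨s, a, ha⟩
    obtain ⟨k, hk, hka⟩ := Option.bind_eq_some_iff.1 ha
    exact ⟨k, ⟨_, Code.evaln_sound hk⟩, (hc k x).2 (Part.dom_iff_mem.2 ⟨a, Code.evaln_sound hka⟩)⟩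
  · rintro ⟨k, ⟨n, hn⟩, hkx⟩
    obtain ⟨a, ha⟩ := Part.dom_iff_mem.1 ((hc k x).1 hkx)
    obtain ⟨t, ht⟩ := Code.evaln_complete.1 hn
    obtain ⟨t', ht'⟩ := Code.evaln_complete.1 ha
    refine ⟨Nat.pair t (Nat.pair n t'), a, Option.bind_eq_some_iff.2 ⟨k, ?_, ?_⟩⟩
    · simpa using ht
    · simpa using ht'

open Nat.Partrec (Code) in
theorem exists_range : ∃ g : ℕ → ℕ, Computable g ∧ ∀ e, (phi (g e)).ran = WSet e := by
  have hF : Partrec₂ (fun e x : ℕ => (phi e x).map fun _ => x) := by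
    have h : Partrec (fun p : ℕ × ℕ => phi p.1 p.2) :=
      Code.eval_part.comp ((Computable.ofNat Code).comp Computable.fst) Computable.snd
    exact h.map ((Computable.snd.comp Computable.fst).to₂)
  obtain ⟨g, hg, hge⟩ := phi_smn hF
  refine ⟨g, hg, fun e => ?_⟩
  rw [hge]
  ext x
  constructor
  · rintro ⟨n, hn⟩
    obtain ⟨a, ha, rfl⟩ := (Part.mem_map_iff _).1 hn
    exact Part.dom_iff_mem.2 ⟨a, ha⟩
  · intro hx
    obtain ⟨a, ha⟩ := Part.dom_iff_mem.1 hx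
    exact ⟨x, (Part.mem_map_iff _).2 ⟨a, ha, rfl⟩⟩

theorem image_classOf_eq_iff {E : ℕ → ℕ → Prop} (hE : Equivalence E) (A B : Set ℕ) :
    classOf E '' A = classOf E '' B ↔ ∀ x, (∃ k ∈ A, E k x) ↔ ∃ k ∈ B, E k x := by
  have key : ∀ (A : Set ℕ) (x : ℕ), (∃ k ∈ A, E k x) ↔ classOf E x ∈ classOf E '' A := by
    intro A x
    constructor
    · rintro ⟨k, hk, hkx⟩
      refine ⟨k, hk, Set.ext fun y => ?_⟩
      exact ⟨fun h => hE.trans (hE.symm hkx) h, fun h => hE.trans hkx h⟩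
    · rintro ⟨k, hk, h⟩
      have : x ∈ classOf E x := hE.refl x
      rw [← h] at this
      exact ⟨k, hk, this⟩
  constructor
  · intro h x
    rw [key, key, h]
  · intro h
    ext S
    constructor
    · rintro ⟨x, hx, rfl⟩
      exact (key B x).1 ((h x).1 ⟨x, hx, hE.refl x⟩)
    · rintro ⟨x, hx, rfl⟩
      exact (key A x).1 ((h x).2 ⟨x, hx, hE.refl x⟩)

/-- If `E` is a ceer then `E⁺ ≤ =^{ce}` via a reduction whose values are codes of
`E`-invariant sets; moreover `E⁺` is computably bireducible with the restriction of
`=^{ce}` to codes of `E`-invariant sets. -/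
theorem jump_ceer_le_eqCE (E : ℕ → ℕ → Prop) (hE : Ceer E) :
    (∃ f : ℕ → ℕ, Computable f ∧ (∀ m n, FSJump E m n ↔ eqCE (f m) (f n)) ∧
      ∀ e, EInvariant E (WSet (f e))) ∧
    (∃ g : ℕ → ℕ, Computable g ∧ ∀ e e', EInvariant E (WSet e) → EInvariant E (WSet e') →
      (WSet e = WSet e' ↔ FSJump E (g e) (g e'))) := by
  have hq := hE.1
  refine ⟨?_, ?_⟩
  · obtain ⟨f, hf, hfe⟩ := exists_saturation E hE
    refine ⟨f, hf, fun m n => ?_, fun e m n hmn hm => ?_⟩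
    · unfold FSJump eqCE
      rw [image_classOf_eq_iff hq, Set.ext_iff]
      simp only [hfe]
    · rw [hfe] at hm ⊢
      obtain ⟨k, hk, hkm⟩ := hm
      exact ⟨k, hk, hq.trans hkm hmn⟩
  · obtain ⟨g, hg, hge⟩ := exists_range
    refine ⟨g, hg, fun e e' he he' => ?_⟩
    have sat : ∀ W : Set ℕ, EInvariant E W → ∀ x, (∃ k ∈ W, E k x) ↔ x ∈ W := fun W hW x =>
      ⟨fun ⟨k, hk, hkx⟩ => hW k x hkx hk, fun hx => ⟨x, hx, hq.refl x⟩⟩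
    unfold FSJump
    rw [hge, hge, image_classOf_eq_iff hq, Set.ext_iff]
    simp only [sat _ he, sat _ he']
end

section
/- For any equivalence relation E on ℕ with infinitely many equivalence classes, the identity relation on ℕ is computably reducible to E⁺⁺. -/
/-- From a partial recursive function of a pair, get a computable index function. -/
theorem smn_index (h : ℕ →. ℕ) (hh : Nat.Partrec h) :
    ∃ g : ℕ → ℕ, Computable g ∧ ∀ m i, phi (g m) i = h (Nat.pair m i) := by
  obtain ⟨c, hc⟩ := Nat.Partrec.Code.exists_code.1 hh
  refine ⟨fun m => Encodable.encode (Nat.Partrec.Code.curry c m), ?_, ?_⟩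
  · exact (Primrec.encode.comp
      (Nat.Partrec.Code.primrec₂_curry.comp (Primrec.const c) Primrec.id)).to_comp
  · intro m i
    simp [phi, Nat.Partrec.Code.eval_curry, hc]

/-- Computable indices for the finite sets of elements of the first `n` entries of a list. -/
theorem list_index : ∃ g : ℕ → ℕ, Computable g ∧
    ∀ n m, (phi (g (Nat.pair n m))).ran =
      {x | x ∈ (Denumerable.ofNat (List ℕ) m).take n} := by
  let o : ℕ → Option ℕ := fun p =>
    if p.unpair.2 < p.unpair.1.unpair.1 then
      (Denumerable.ofNat (List ℕ) p.unpair.1.unpair.2)[p.unpair.2]? else none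
  have ho : Primrec o := by
    have h1 : Primrec fun p : ℕ => p.unpair.1 := Primrec.fst.comp Primrec.unpair
    have h2 : Primrec fun p : ℕ => p.unpair.2 := Primrec.snd.comp Primrec.unpair
    refine Primrec.ite (Primrec.nat_lt.comp h2 (h1.comp h1)) ?_ (Primrec.const none)
    exact Primrec.list_getElem?.comp ((Primrec.ofNat (List ℕ)).comp (h2.comp h1)) h2
  have hp : Nat.Partrec (fun p => (o p : Part ℕ)) :=
    Partrec.nat_iff.1 (Computable.ofOption ho.to_comp)
  obtain ⟨g, hg, hg'⟩ := smn_index _ hp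
  refine ⟨g, hg, fun n m => ?_⟩
  ext x
  simp only [PFun.ran, Set.mem_ofPred_eq, hg', Part.mem_ofOption, o, Nat.unpair_pair,
    List.mem_iff_getElem?, List.getElem?_take]
  simp

/-- For any equivalence relation `E` with infinitely many classes, `id ≤ E⁺⁺`. -/
theorem id_le_double_jump (E : ℕ → ℕ → Prop) (hE : Equivalence E)
    (hinf : (Set.range (classOf E)).Infinite) :
    Reduces (@Eq ℕ) (FSJump (FSJump E)) := by
  obtain ⟨g, hg, hg'⟩ := list_index
  obtain ⟨f, hf, hf'⟩ := smn_index (fun p => Part.some (g p)) (Partrec.nat_iff.1 hg.partrec)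
  have hran : ∀ n, (phi (f n)).ran = Set.range fun m => g (Nat.pair n m) := by
    intro n
    ext x
    simp [PFun.ran, hf', eq_comm]
  have key : ∀ m n, m < n → ¬ (classOf (FSJump E) '' (phi (f m)).ran =
      classOf (FSJump E) '' (phi (f n)).ran) := by
    intro m n hmn heq
    obtain ⟨t, ht, htn⟩ := hinf.exists_subset_card_eq n
    obtain ⟨s, hs, hst⟩ : ∃ s : Finset ℕ, s.card = n ∧ classOf E '' (s : Set ℕ) = t := by
      classical
      choose! r hr using fun (c : Set ℕ) (hc : c ∈ t) => ht hc
      refine ⟨t.image r, ?_, ?_⟩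
      · rw [Finset.card_image_of_injOn, htn]
        intro a ha b hb hab
        rw [← hr a ha, ← hr b hb, hab]
      · ext c
        simp only [Finset.coe_image, Set.mem_image, Finset.mem_coe, exists_exists_and_eq_and]
        constructor
        · rintro ⟨a, ha, rfl⟩
          rwa [hr a ha]
        · intro hc
          exact ⟨c, hc, hr c hc⟩
    have hmem : classOf (FSJump E) (g (Nat.pair n (Encodable.encode s.toList))) ∈
        classOf (FSJump E) '' (phi (f n)).ran := by
      rw [hran]
      exact ⟨_, ⟨_, rfl⟩, rfl⟩
    rw [← heq, hran] at hmem
    obtain ⟨_, ⟨k, rfl⟩, hk⟩ := hmem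
    have hself : g (Nat.pair n (Encodable.encode s.toList)) ∈
        classOf (FSJump E) (g (Nat.pair n (Encodable.encode s.toList))) := by
      simp [classOf, FSJump]
    rw [← hk] at hself
    have h2 : classOf E '' _ = classOf E '' _ := hself
    have htake : List.take n s.toList = s.toList := List.take_of_length_le (by simp [hs])
    rw [hg', hg', Denumerable.ofNat_encode, htake] at h2
    have hset : {x | x ∈ s.toList} = {x | x ∈ s} := by ext; simp
    rw [hset] at h2
    have h3 : classOf E '' {x | x ∈ s} = t := hst
    rw [h3] at h2
    have hle : (t : Set (Set ℕ)).ncard ≤ m := by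
      classical
      rw [← h2]
      have h4 : {x | x ∈ List.take m (Denumerable.ofNat (List ℕ) k)} =
        ((List.take m (Denumerable.ofNat (List ℕ) k)).toFinset : Set ℕ) := by ext; simp
      rw [h4]
      refine (Set.ncard_image_le (Finset.finite_toSet _)).trans ?_
      rw [Set.ncard_coe_finset]
      exact (List.toFinset_card_le _).trans (by simp)
    rw [Set.ncard_coe_finset] at hle
    omega
  refine ⟨f, hf, fun m n => ⟨?_, ?_⟩⟩
  · rintro rfl; rfl
  · intro h
    rcases lt_trichotomy m n with h1 | h1 | h1
    · exact (key _ _ h1 h).elim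
    · exact h1
    · exact (key _ _ h1 h.symm).elim
end

section
/- There exists a set A ⊆ ℕ with infinite complement such that A is Σ⁰₄ (i.e., there is a computable predicate R ⊆ ℕ⁵ with n ∈ A ⟺ ∃p ∀q ∃m ∀s R(p,q,m,s,n)) and the identity relation on ℕ is not computably reducible to (E_A)⁺. -/
/-- `E_A`: `m E_A n` iff `m = n` or both `m, n ∈ A`. -/
def EA (A : Set ℕ) : ℕ → ℕ → Prop :=
  fun m n => m = n ∨ (m ∈ A ∧ n ∈ A)

open Nat.Partrec (Code)
open Filter

namespace FSJ

/-- Enumeration of the `j`-th c.e. set, `j = ⟨a, i⟩`: the range of `φ_{φ_a(i)}`. -/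
def el (j w : ℕ) : Option ℕ :=
  (Code.evaln w.unpair.2 (Denumerable.ofNat Code j.unpair.1) j.unpair.2).bind
    fun v => Code.evaln w.unpair.2 (Denumerable.ofNat Code v) w.unpair.1

theorem el_primrec : Primrec₂ el := by
  unfold el
  refine Primrec.option_bind (f := fun p : ℕ × ℕ => Code.evaln p.2.unpair.2 (Denumerable.ofNat Code p.1.unpair.1) p.1.unpair.2)
    (g := fun (p : ℕ × ℕ) v => Code.evaln p.2.unpair.2 (Denumerable.ofNat Code v) p.2.unpair.1) ?_ ?_
  · have h1 : Primrec fun p : ℕ × ℕ => p.2.unpair := Primrec.unpair.comp Primrec.snd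
    have h2 : Primrec fun p : ℕ × ℕ => p.1.unpair := Primrec.unpair.comp Primrec.fst
    exact Code.primrec_evaln.comp (((Primrec.snd.comp h1).pair
      ((Primrec.ofNat Code).comp (Primrec.fst.comp h2))).pair (Primrec.snd.comp h2))
  · have h1 : Primrec fun p : (ℕ × ℕ) × ℕ => p.1.2.unpair :=
      Primrec.unpair.comp (Primrec.snd.comp Primrec.fst)
    exact Code.primrec_evaln.comp (((Primrec.snd.comp h1).pair
      ((Primrec.ofNat Code).comp Primrec.snd)).pair (Primrec.fst.comp h1))

theorem el_iff (a i f y : ℕ) (h : phi a i = Part.some f) :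
    (∃ w, el (Nat.pair a i) w = some y) ↔ y ∈ (phi f).ran := by
  unfold phi at h
  constructor
  · rintro ⟨w, hw⟩
    simp only [el, Nat.unpair_pair, Option.bind_eq_some_iff] at hw
    obtain ⟨v, hv, hy⟩ := hw
    have h1 := Code.evaln_sound hv
    rw [h, Part.mem_some_iff] at h1
    subst h1
    exact ⟨_, Code.evaln_sound hy⟩
  · rintro ⟨x, hx⟩
    have h1 : f ∈ Code.eval (Denumerable.ofNat Code a) i := by rw [h]; exact Part.mem_some _
    obtain ⟨t1, h1⟩ := Code.evaln_complete.1 h1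
    obtain ⟨t2, h2⟩ := Code.evaln_complete.1 hx
    refine ⟨Nat.pair x (max t1 t2), ?_⟩
    simp only [el, Nat.unpair_pair, Option.bind_eq_some_iff]
    exact ⟨f, Code.evaln_mono (le_max_left _ _) h1, Code.evaln_mono (le_max_right _ _) h2⟩

/-- Stage approximation. -/
def U (j s y : ℕ) : Prop := ∃ w < s, el j w = some y

instance (j s y : ℕ) : Decidable (U j s y) := by unfold U; infer_instance

/-- Bits to number, most significant bit first. -/
def stg (b : ℕ → ℕ) : ℕ → ℕ
  | 0 => 0
  | k + 1 => 2 * stg b k + b k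

def st (k s y : ℕ) : ℕ := stg (fun j => if U j s y then 1 else 0) k

def UT (j y : ℕ) : Prop := ∃ w, el j w = some y

open Classical in
noncomputable def stT (k y : ℕ) : ℕ := stg (fun j => if UT j y then 1 else 0) k

theorem stg_lt (b : ℕ → ℕ) (hb : ∀ j, b j < 2) (k : ℕ) : stg b k < 2 ^ k := by
  induction k with
  | zero => simp [stg]
  | succ k ih => have := hb k; simp only [stg, pow_succ]; omega

theorem stg_div (b : ℕ → ℕ) (hb : ∀ j, b j < 2) (k d : ℕ) : stg b (k + d) / 2 ^ d = stg b k := by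
  induction d with
  | zero => simp
  | succ d ih =>
    rw [← ih, pow_succ', ← Nat.div_div_eq_div_mul]
    congr 1
    have := hb (k + d)
    rw [← add_assoc, stg]; omega

theorem st_div {k K : ℕ} (h : k ≤ K) (s y : ℕ) : st K s y / 2 ^ (K - k) = st k s y := by
  obtain ⟨d, rfl⟩ := Nat.exists_eq_add_of_le h
  rw [Nat.add_sub_cancel_left]
  exact stg_div _ (fun j => by split <;> omega) k d

theorem stT_div {k K : ℕ} (h : k ≤ K) (y : ℕ) : stT K y / 2 ^ (K - k) = stT k y := by
  obtain ⟨d, rfl⟩ := Nat.exists_eq_add_of_le h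
  rw [Nat.add_sub_cancel_left]
  exact stg_div _ (fun j => by split <;> omega) k d

theorem stT_lt (k y : ℕ) : stT k y < 2 ^ k := stg_lt _ (fun j => by split <;> omega) k

theorem U_lim (j y : ℕ) : ∀ᶠ s in atTop, (U j s y ↔ UT j y) := by
  by_cases h : UT j y
  · obtain ⟨w, hw⟩ := h
    filter_upwards [eventually_gt_atTop w] with s hs
    exact ⟨fun _ => ⟨w, hw⟩, fun _ => ⟨w, hs, hw⟩⟩
  · refine Eventually.of_forall fun s => ⟨?_, fun h' => (h h').elim⟩
    rintro ⟨w, -, hw⟩; exact ⟨w, hw⟩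

theorem st_lim (k y : ℕ) : ∀ᶠ s in atTop, st k s y = stT k y := by
  induction k with
  | zero => simp [st, stT, stg]
  | succ k ih =>
    filter_upwards [ih, U_lim k y] with s h1 h2
    simp only [st, stT, stg] at h1 ⊢
    rw [h1]; by_cases hu : UT k y
    · rw [if_pos hu, if_pos (h2.2 hu)]
    · rw [if_neg hu, if_neg (fun h => hu (h2.1 h))]

def IsLim (K σ : ℕ) : Prop := (∀ᶠ y in atTop, σ ≤ stT K y) ∧ ∃ᶠ y in atTop, stT K y = σ

theorem IsLim.unique {K σ τ : ℕ} (h : IsLim K σ) (h' : IsLim K τ) : σ = τ := by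
  obtain ⟨y, h1, h2⟩ := (h.2.and_eventually h'.1).exists
  obtain ⟨z, h3, h4⟩ := (h'.2.and_eventually h.1).exists
  omega

theorem exists_isLim (K : ℕ) : ∃ σ, IsLim K σ := by
  classical
  have hex : ∃ σ, ∃ᶠ y in atTop, stT K y = σ := by
    by_contra hc
    simp only [not_exists, not_frequently] at hc
    have : ∀ᶠ y in atTop, ∀ σ ∈ Finset.range (2 ^ K), ¬ stT K y = σ :=
      (Filter.eventually_all_finset _).2 fun σ _ => hc σ
    obtain ⟨y, hy⟩ := this.exists
    exact hy _ (Finset.mem_range.2 (stT_lt K y)) rfl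
  refine ⟨Nat.find hex, ?_, Nat.find_spec hex⟩
  have : ∀ᶠ y in atTop, ∀ σ ∈ Finset.range (Nat.find hex), ¬ stT K y = σ :=
    (Filter.eventually_all_finset _).2 fun σ hσ =>
      not_frequently.1 (Nat.find_min hex (Finset.mem_range.1 hσ))
  filter_upwards [this] with y hy
  by_contra hlt
  exact hy _ (Finset.mem_range.2 (not_le.1 hlt)) rfl

theorem IsLim.div {k K σ : ℕ} (h : IsLim K σ) (hk : k ≤ K) : IsLim k (σ / 2 ^ (K - k)) := by
  refine ⟨?_, ?_⟩
  · filter_upwards [h.1] with y hy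
    rw [← stT_div hk]; exact Nat.div_le_div_right hy
  · refine h.2.mono fun y hy => ?_
    rw [← stT_div hk, hy]

noncomputable def sg (K : ℕ) : ℕ := (exists_isLim K).choose

theorem sg_spec (K : ℕ) : IsLim K (sg K) := (exists_isLim K).choose_spec

theorem sg_div {k K : ℕ} (h : k ≤ K) : sg K / 2 ^ (K - k) = sg k :=
  ((sg_spec K).div h).unique (sg_spec k)

def kk (e : ℕ) : ℕ := Nat.pair e (2 ^ (e + 2) + 1)

theorem kk_mono : Monotone kk := by
  intro a b h
  have h1 : 2 ^ (a + 2) + 1 ≤ 2 ^ (b + 2) + 1 := by gcongr; norm_num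
  unfold kk
  calc Nat.pair a (2 ^ (a + 2) + 1) ≤ Nat.pair a (2 ^ (b + 2) + 1) := by
        rcases h1.eq_or_lt with h1 | h1
        · rw [h1]
        · exact (Nat.pair_lt_pair_right _ h1).le
    _ ≤ _ := by
        rcases h.eq_or_lt with h1 | h1
        · rw [h1]
        · exact (Nat.pair_lt_pair_left _ h1).le

/-- counting function of `C`. -/
noncomputable def g : ℕ → ℕ
  | 0 => 0
  | n + 1 => g n + if stT (kk (g n)) n = sg (kk (g n)) then 1 else 0

def C : Set ℕ := {n | stT (kk (g n)) n = sg (kk (g n))}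

theorem g_succ_mem {n : ℕ} (h : n ∈ C) : g (n + 1) = g n + 1 := by
  have h : stT (kk (g n)) n = sg (kk (g n)) := h
  rw [g, if_pos h]

theorem g_succ_not_mem {n : ℕ} (h : n ∉ C) : g (n + 1) = g n := by
  have h : ¬ stT (kk (g n)) n = sg (kk (g n)) := h
  rw [g, if_neg h, add_zero]

theorem g_mono : Monotone g := by
  refine monotone_nat_of_le_succ fun n => ?_
  rw [g]; omega

theorem g_le (n : ℕ) : g n ≤ n := by
  induction n with
  | zero => simp [g]
  | succ n ih => rw [g]; split <;> omega

theorem g_inj {m n : ℕ} (hm : m ∈ C) (hn : n ∈ C) (h : g m = g n) : m = n := by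
  have h1 := g_succ_mem hm
  have h2 := g_succ_mem hn
  rcases lt_trichotomy m n with hl | hl | hl
  · have := g_mono (show m + 1 ≤ n from hl); omega
  · exact hl
  · have := g_mono (show n + 1 ≤ m from hl); omega

theorem C_infinite : C.Infinite := by
  intro hf
  obtain ⟨B, hB⟩ := hf.bddAbove
  have hc : ∀ n, g (B + 1 + n) = g (B + 1) := by
    intro n
    induction n with
    | zero => rfl
    | succ n ih =>
      rw [← ih, ← add_assoc]
      apply g_succ_not_mem
      intro h; have := hB h; omega
  obtain ⟨y, h1, h2⟩ := ((sg_spec (kk (g (B + 1)))).2.and_eventually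
    (eventually_ge_atTop (B + 1))).exists
  obtain ⟨d, rfl⟩ := Nat.exists_eq_add_of_le h2
  have : B + 1 + d ∈ C := by
    show stT _ _ = _
    rw [hc]; exact h1
  have := hB this; omega

theorem homog {c e j : ℕ} (hc : c ∈ C) (he : e ≤ g c) (hj : j < kk e) :
    UT j c ↔ sg (j + 1) % 2 = 1 := by
  have h : stT (kk (g c)) c = sg (kk (g c)) := hc
  have hle : j + 1 ≤ kk (g c) := le_trans hj (kk_mono he)
  have h2 : stT (j + 1) c = sg (j + 1) := by rw [← stT_div hle, h, sg_div hle]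
  rw [← h2]
  simp only [stT, stg]
  split <;> simp_all

/-! ### Complexity -/

def G (K σ s : ℕ) : ℕ → ℕ
  | 0 => 0
  | n + 1 => G K σ s n + if st (kk (G K σ s n)) s n = σ / 2 ^ (K - kk (G K σ s n)) then 1 else 0

theorem G_eq (K s n : ℕ) (hK : kk n ≤ K) (hs : ∀ x ≤ n, st K s x = stT K x) (m : ℕ)
    (hm : m ≤ n + 1) : G K (sg K) s m = g m := by
  induction m with
  | zero => rfl
  | succ m ih =>
    have ih := ih (by omega)
    have hk : kk (g m) ≤ K := le_trans (kk_mono (le_trans (g_le m) (by omega))) hK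
    rw [G, g, ih, ← st_div hk, hs m (by omega), stT_div hk, sg_div hk]

/-- The matrix; `p = ⟨σ, ⟨b, s0⟩⟩`, `m = ⟨y, s1⟩`. -/
def RP (σ b s0 q y s1 s n : ℕ) : Prop :=
  (b < q → σ ≤ st (kk n) (s1 + s) q) ∧ (q < y ∧ st (kk n) (s1 + s) y = σ) ∧
  (q ≤ n → st (kk n) (s0 + s) q = st (kk n) s0 q) ∧ G (kk n) σ s0 (n + 1) = G (kk n) σ s0 n

theorem RP_iff (n : ℕ) : n ∉ C ↔ ∃ σ b s0, ∀ q, ∃ y s1, ∀ s, RP σ b s0 q y s1 s n := by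
  have key : ∀ s0, (∀ x ≤ n, st (kk n) s0 x = stT (kk n) x) →
      (n ∉ C ↔ G (kk n) (sg (kk n)) s0 (n + 1) = G (kk n) (sg (kk n)) s0 n) := by
    intro s0 h
    rw [G_eq _ _ n le_rfl h _ le_rfl, G_eq _ _ n le_rfl h _ (Nat.le_succ n)]
    constructor
    · exact g_succ_not_mem
    · intro h hc; have := g_succ_mem hc; omega
  constructor
  · intro hn
    obtain ⟨b, hb⟩ := eventually_atTop.1 (sg_spec (kk n)).1
    have : ∀ᶠ s in atTop, ∀ x ∈ Finset.range (n + 1), st (kk n) s x = stT (kk n) x :=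
      (Filter.eventually_all_finset _).2 fun x _ => st_lim _ _
    obtain ⟨s0, hs0⟩ := eventually_atTop.1 this
    simp only [Finset.mem_range, Nat.lt_succ_iff] at hs0
    refine ⟨sg (kk n), b, s0, fun q => ?_⟩
    obtain ⟨y, h1, h2⟩ := ((sg_spec (kk n)).2.and_eventually (eventually_gt_atTop q)).exists
    obtain ⟨s1, hs1⟩ := eventually_atTop.1 ((st_lim (kk n) q).and (st_lim (kk n) y))
    refine ⟨y, s1, fun s => ⟨?_, ⟨h2, ?_⟩, ?_, ?_⟩⟩
    · intro hq
      rw [(hs1 (s1 + s) (by omega)).1]; exact hb q hq.le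
    · rw [(hs1 (s1 + s) (by omega)).2, h1]
    · intro hq
      rw [hs0 (s0 + s) (by omega) q hq, hs0 s0 le_rfl q hq]
    · exact (key s0 (hs0 s0 le_rfl)).1 hn
  · rintro ⟨σ, b, s0, h⟩
    have hsh : ∀ (s1 x : ℕ), ∃ s, st (kk n) (s1 + s) x = stT (kk n) x := by
      intro s1 x
      obtain ⟨t, ht⟩ := eventually_atTop.1 (st_lim (kk n) x)
      exact ⟨t, ht _ (by omega)⟩
    have hσ : IsLim (kk n) σ := by
      refine ⟨?_, ?_⟩
      · filter_upwards [eventually_gt_atTop b] with q hq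
        obtain ⟨y, s1, h⟩ := h q
        obtain ⟨s, hs⟩ := hsh s1 q
        rw [← hs]; exact (h s).1 hq
      · rw [frequently_atTop]
        intro q
        obtain ⟨y, s1, h⟩ := h q
        obtain ⟨s, hs⟩ := hsh s1 y
        exact ⟨y, (h s).2.1.1.le, by rw [← hs]; exact (h s).2.1.2⟩
    obtain rfl := hσ.unique (sg_spec (kk n))
    refine (key s0 ?_).2 ?_
    · intro x hx
      obtain ⟨y, s1, h⟩ := h x
      obtain ⟨s, hs⟩ := hsh s0 x
      rw [← hs]; exact ((h s).2.2.1 hx).symm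
    · obtain ⟨y, s1, h⟩ := h 0
      exact (h 0).2.2.2

theorem U_primrec : PrimrecPred fun p : ℕ × ℕ × ℕ => U p.1 p.2.1 p.2.2 := by
  have h : PrimrecRel fun (w : ℕ) (p : ℕ × ℕ) => el p.1 w = some p.2 :=
    PrimrecRel.comp Primrec.eq
      (el_primrec.comp (Primrec.fst.comp Primrec.snd) Primrec.fst)
      (Primrec.option_some.comp (Primrec.snd.comp Primrec.snd))
  have h2 := PrimrecRel.exists_mem_list h
  refine (PrimrecRel.comp h2 (f := fun p : ℕ × ℕ × ℕ => List.range p.2.1)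
    (g := fun p => (p.1, p.2.2)) (Primrec.list_range.comp (Primrec.fst.comp Primrec.snd))
    (Primrec.fst.pair (Primrec.snd.comp Primrec.snd))).of_eq fun p => ?_
  simp [U]

theorem st_primrec : Primrec fun p : ℕ × ℕ × ℕ => st p.1 p.2.1 p.2.2 := by
  have h : Primrec₂ fun (p : ℕ × ℕ × ℕ) (r : ℕ × ℕ) =>
      2 * r.2 + if U r.1 p.2.1 p.2.2 then 1 else 0 := by
    refine Primrec.nat_add.comp (Primrec.nat_mul.comp (Primrec.const 2)
      (Primrec.snd.comp Primrec.snd)) (Primrec.ite ?_ (Primrec.const 1) (Primrec.const 0))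
    exact U_primrec.comp ((Primrec.fst.comp Primrec.snd).pair
      (Primrec.snd.comp Primrec.fst))
  refine (Primrec.nat_rec' Primrec.fst (Primrec.const 0) h).of_eq ?_
  rintro ⟨k, s, y⟩
  show _ = st k s y
  induction k with
  | zero => rfl
  | succ k ih => simp only [st, stg] at ih ⊢; rw [← ih]

theorem pow_primrec : Primrec fun n : ℕ => 2 ^ n := by
  refine (Primrec.nat_rec₁ (f := fun _ r => 2 * r) 1
    (Primrec.nat_mul.comp (Primrec.const 2) Primrec.snd)).of_eq ?_
  intro n
  induction n with
  | zero => rfl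
  | succ n ih => simp only [pow_succ'] at ih ⊢; rw [← ih]

theorem kk_primrec : Primrec kk :=
  Primrec₂.natPair.comp Primrec.id (Primrec.succ.comp
    (pow_primrec.comp (Primrec.nat_add.comp Primrec.id (Primrec.const 2))))

theorem G_primrec : Primrec fun p : (ℕ × ℕ × ℕ) × ℕ => G p.1.1 p.1.2.1 p.1.2.2 p.2 := by
  have h : Primrec₂ fun (p : (ℕ × ℕ × ℕ) × ℕ) (r : ℕ × ℕ) =>
      r.2 + if st (kk r.2) p.1.2.2 r.1 = p.1.2.1 / 2 ^ (p.1.1 - kk r.2) then 1 else 0 := by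
    have hp : Primrec fun t : ((ℕ × ℕ × ℕ) × ℕ) × (ℕ × ℕ) => t.1.1 := Primrec.fst.comp Primrec.fst
    have hr : Primrec fun t : ((ℕ × ℕ × ℕ) × ℕ) × (ℕ × ℕ) => t.2.2 := Primrec.snd.comp Primrec.snd
    have hk := kk_primrec.comp hr
    refine Primrec.nat_add.comp hr (Primrec.ite ?_ (Primrec.const 1) (Primrec.const 0))
    refine PrimrecRel.comp Primrec.eq (st_primrec.comp (hk.pair
      ((Primrec.snd.comp (Primrec.snd.comp hp)).pair (Primrec.fst.comp Primrec.snd)))) ?_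
    exact Primrec.nat_div.comp (Primrec.fst.comp (Primrec.snd.comp hp))
      (pow_primrec.comp (Primrec.nat_sub.comp (Primrec.fst.comp hp) hk))
  refine (Primrec.nat_rec' Primrec.snd (Primrec.const 0) h).of_eq ?_
  rintro ⟨⟨K, σ, s⟩, n⟩
  show _ = G K σ s n
  induction n with
  | zero => rfl
  | succ n ih => simp only [G] at ih ⊢; rw [← ih]

theorem RP_primrec : PrimrecPred fun t : ℕ × ℕ × ℕ × ℕ × ℕ =>
    RP t.1.unpair.1 t.1.unpair.2.unpair.1 t.1.unpair.2.unpair.2 t.2.1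
      t.2.2.1.unpair.1 t.2.2.1.unpair.2 t.2.2.2.1 t.2.2.2.2 := by
  have hp : Primrec fun t : ℕ × ℕ × ℕ × ℕ × ℕ => t.1.unpair := Primrec.unpair.comp Primrec.fst
  have hp2 : Primrec fun t : ℕ × ℕ × ℕ × ℕ × ℕ => t.1.unpair.2.unpair :=
    Primrec.unpair.comp (Primrec.snd.comp hp)
  have hσ := Primrec.fst.comp hp
  have hb := Primrec.fst.comp hp2
  have hs0 := Primrec.snd.comp hp2
  have h2 : Primrec fun t : ℕ × ℕ × ℕ × ℕ × ℕ => t.2 := Primrec.snd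
  have hq := Primrec.fst.comp h2
  have h3 := Primrec.snd.comp h2
  have hm := Primrec.unpair.comp (Primrec.fst.comp h3)
  have hy := Primrec.fst.comp hm
  have hs1 := Primrec.snd.comp hm
  have hs := Primrec.fst.comp (Primrec.snd.comp h3)
  have hn := Primrec.snd.comp (Primrec.snd.comp h3)
  have hk := kk_primrec.comp hn
  have h1s := Primrec.nat_add.comp hs1 hs
  have h0s := Primrec.nat_add.comp hs0 hs
  have c1 := (PrimrecRel.comp Primrec.nat_lt hb hq).not.or
    (PrimrecRel.comp Primrec.nat_le hσ (st_primrec.comp (hk.pair (h1s.pair hq))))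
  have c2 := (PrimrecRel.comp Primrec.nat_lt hq hy).and
    (PrimrecRel.comp Primrec.eq (st_primrec.comp (hk.pair (h1s.pair hy))) hσ)
  have c3 := (PrimrecRel.comp Primrec.nat_le hq hn).not.or
    (PrimrecRel.comp Primrec.eq (st_primrec.comp (hk.pair (h0s.pair hq)))
      (st_primrec.comp (hk.pair (hs0.pair hq))))
  have c4 := PrimrecRel.comp Primrec.eq
    (G_primrec.comp ((hk.pair (hσ.pair hs0)).pair (Primrec.succ.comp hn)))
    (G_primrec.comp ((hk.pair (hσ.pair hs0)).pair hn))
  refine (c1.and (c2.and (c3.and c4))).of_eq fun t => ?_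
  simp only [RP, imp_iff_not_or, Nat.succ_eq_add_one]

theorem C_compl_sigma : ∃ R : ℕ × ℕ × ℕ × ℕ × ℕ → Bool, Computable R ∧
    ∀ n, n ∈ Cᶜ ↔ ∃ p, ∀ q, ∃ m, ∀ s, R (p, q, m, s, n) = true := by
  obtain ⟨inst, h⟩ := RP_primrec
  refine ⟨_, h.to_comp, fun n => ?_⟩
  simp only [decide_eq_true_eq]
  rw [Set.mem_compl_iff, RP_iff]
  constructor
  · rintro ⟨σ, b, s0, h⟩
    refine ⟨Nat.pair σ (Nat.pair b s0), fun q => ?_⟩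
    obtain ⟨y, s1, h⟩ := h q
    refine ⟨Nat.pair y s1, fun s => ?_⟩
    simpa using h s
  · rintro ⟨p, h⟩
    refine ⟨p.unpair.1, p.unpair.2.unpair.1, p.unpair.2.unpair.2, fun q => ?_⟩
    obtain ⟨m, h⟩ := h q
    exact ⟨m.unpair.1, m.unpair.2, h⟩

/-! ### Non-reducibility -/

theorem classOf_EA {A : Set ℕ} {x y : ℕ} (hx : x ∈ A) (hy : y ∈ A) :
    classOf (EA A) x = classOf (EA A) y := by
  ext z
  simp only [classOf, EA, Set.mem_setOf_eq]
  constructor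
  · rintro (rfl | h)
    · exact Or.inr ⟨hy, hx⟩
    · exact Or.inr ⟨hy, h.2⟩
  · rintro (rfl | h)
    · exact Or.inr ⟨hx, hy⟩
    · exact Or.inr ⟨hx, h.2⟩

theorem image_sub {A V W : Set ℕ} (h1 : ∀ x ∉ A, x ∈ V → x ∈ W)
    (h2 : (∃ x ∈ A, x ∈ V) → ∃ x ∈ A, x ∈ W) :
    classOf (EA A) '' V ⊆ classOf (EA A) '' W := by
  rintro _ ⟨x, hx, rfl⟩
  by_cases hA : x ∈ A
  · obtain ⟨y, hy, hyW⟩ := h2 ⟨x, hA, hx⟩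
    exact ⟨y, hyW, classOf_EA hy hA⟩
  · exact ⟨x, h1 x hA hx, rfl⟩

theorem not_reduces : ¬ Reduces (@Eq ℕ) (FSJump (EA Cᶜ)) := by
  classical
  rintro ⟨f, hf, hred⟩
  obtain ⟨c, hc⟩ := Code.exists_code.1 (Partrec.nat_iff.1 hf.partrec)
  obtain ⟨a, rfl⟩ : ∃ a, Denumerable.ofNat Code a = c := ⟨Encodable.encode c, by simp⟩
  have hphi : ∀ i, phi a i = Part.some (f i) := fun i => by
    unfold phi; rw [hc]; rfl
  have hV : ∀ i y, UT (Nat.pair a i) y ↔ y ∈ (phi (f i)).ran := fun i y =>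
    el_iff a i (f i) y (hphi i)
  let ty : ℕ → Finset ℕ × Bool × Bool := fun i =>
    ((Finset.range a).filter fun t => ∃ c ∈ C, g c = t ∧ c ∈ (phi (f i)).ran,
      decide (sg (Nat.pair a i + 1) % 2 = 1), decide (∃ x ∈ Cᶜ, x ∈ (phi (f i)).ran))
  have hcard : ((Finset.range a).powerset ×ˢ (Finset.univ : Finset (Bool × Bool))).card
      < (Finset.range (2 ^ (a + 2) + 1)).card := by
    rw [Finset.card_product, Finset.card_powerset, Finset.card_range, Finset.card_range]
    simp [pow_add]
  obtain ⟨i, hi, i', hi', hne, heq⟩ :=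
    Finset.exists_ne_map_eq_of_card_lt_of_maps_to hcard (f := ty) (by
      intro i _
      simp only [ty, Finset.coe_product, Set.mem_prod, Finset.mem_coe, Finset.mem_powerset,
        Finset.mem_univ, and_true]
      exact Finset.filter_subset _ _)
  rw [Finset.mem_range] at hi hi'
  simp only [ty, Prod.mk.injEq, decide_eq_decide] at heq
  obtain ⟨e1, e2, e3⟩ := heq
  have hmem : ∀ x ∈ C, (x ∈ (phi (f i)).ran ↔ x ∈ (phi (f i')).ran) := by
    intro x hx
    by_cases hg : a ≤ g x
    · rw [← hV, ← hV, homog hx hg (Nat.pair_lt_pair_right _ hi),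
        homog hx hg (Nat.pair_lt_pair_right _ hi'), e2]
    · have key : ∀ j, x ∈ (phi (f j)).ran ↔ g x ∈ (Finset.range a).filter
          fun t => ∃ c ∈ C, g c = t ∧ c ∈ (phi (f j)).ran := by
        intro j
        rw [Finset.mem_filter, Finset.mem_range]
        constructor
        · intro h; exact ⟨not_le.1 hg, x, hx, rfl, h⟩
        · rintro ⟨-, c, hcC, hgc, hcr⟩
          rwa [← g_inj hcC hx hgc]
      rw [key i, key i', e1]
  refine hne ((hred i i').2 ?_)
  refine Set.Subset.antisymm (image_sub ?_ e3.1) (image_sub ?_ e3.2)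
  · intro x hx; exact (hmem x (not_not.1 hx)).1
  · intro x hx; exact (hmem x (not_not.1 hx)).2

end FSJ

/-- There is a coinfinite `Σ⁰₄` set `A` with `id` not computably reducible
to `(E_A)⁺`. -/
theorem exists_sigma04_id_not_reducible_jump :
    ∃ A : Set ℕ, Aᶜ.Infinite ∧
      (∃ R : ℕ × ℕ × ℕ × ℕ × ℕ → Bool, Computable R ∧
        ∀ n, n ∈ A ↔ ∃ p, ∀ q, ∃ m, ∀ s, R (p, q, m, s, n) = true) ∧
      ¬ Reduces (@Eq ℕ) (FSJump (EA A)) := by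
  exact ⟨FSJ.Cᶜ, by rw [compl_compl]; exact FSJ.C_infinite, FSJ.C_compl_sigma, FSJ.not_reduces⟩
end

section
/- If A and B are c.e. subsets of ℕ with B ⊆ A, then (E_A)⁺ is computably reducible to (E_B)⁺. -/
/-- A set is c.e. if it is `W_e` for some `e`. -/
def CeSet (S : Set ℕ) : Prop := ∃ e : ℕ, S = WSet e

/-- Code-level step: enumerates the `E_A`-saturation of `ran φ_e`. -/
def satStep (c : Nat.Partrec.Code) (e n : ℕ) : Part ℕ :=
  (phi e n.unpair.1).bind fun x =>
    bif decide (x = n.unpair.2) then Part.some x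
    else (c.eval x).bind fun _ => (c.eval n.unpair.2).map fun _ => n.unpair.2

theorem satStep_partrec (c : Nat.Partrec.Code) :
    Partrec fun p : ℕ × ℕ => satStep c p.1 p.2 := by
  have hu1 : Computable fun p : ℕ × ℕ => p.2.unpair.1 :=
    Computable.fst.comp (Computable.unpair.comp Computable.snd)
  have hu2 : Computable fun p : ℕ × ℕ => p.2.unpair.2 :=
    Computable.snd.comp (Computable.unpair.comp Computable.snd)
  have hc : Partrec c.eval := Partrec.nat_iff.2 (Nat.Partrec.Code.exists_code.2 ⟨c, rfl⟩)
  unfold satStep phi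
  refine Partrec.bind (Nat.Partrec.Code.eval_part.comp
    ((Computable.ofNat _).comp Computable.fst) hu1) ?_
  refine Partrec.cond ?_ Computable.snd ?_
  · exact (Primrec.eq (α := ℕ)).decide.to_comp.comp Computable.snd (hu2.comp Computable.fst)
  · refine Partrec.bind (hc.comp Computable.snd) ?_
    have h3 : Computable fun q : ((ℕ × ℕ) × ℕ) × ℕ => q.1.1.2.unpair.2 :=
      hu2.comp (Computable.fst.comp Computable.fst)
    exact Partrec.map (hc.comp h3) (h3.comp Computable.fst).to₂

/-- The saturation of a set under a relation. -/
def satSet (E : ℕ → ℕ → Prop) (S : Set ℕ) : Set ℕ := {y | ∃ x ∈ S, E x y}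

theorem EA_refl (A : Set ℕ) (x : ℕ) : EA A x x := Or.inl rfl

theorem EA_symm {A : Set ℕ} {x y : ℕ} (h : EA A x y) : EA A y x := by
  unfold EA at *; grind

theorem EA_trans {A : Set ℕ} {x y z : ℕ} (h : EA A x y) (h' : EA A y z) : EA A x z := by
  unfold EA at *; grind

theorem classOf_EA {A : Set ℕ} {x y : ℕ} : classOf (EA A) x = classOf (EA A) y ↔ EA A x y := by
  constructor
  · intro h
    have : y ∈ classOf (EA A) y := EA_refl A y
    rw [← h] at this
    exact this
  · intro h
    ext z
    exact ⟨fun hz => EA_trans (EA_symm h) hz, fun hz => EA_trans h hz⟩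

theorem image_eq_iff_s15 (A S T : Set ℕ) :
    classOf (EA A) '' S = classOf (EA A) '' T ↔ satSet (EA A) S = satSet (EA A) T := by
  have key : ∀ S : Set ℕ, ∀ y, y ∈ satSet (EA A) S ↔ classOf (EA A) y ∈ classOf (EA A) '' S := by
    intro S y
    simp only [satSet, Set.mem_setOf_eq, Set.mem_image, classOf_EA]
  constructor
  · intro h
    ext y
    rw [key, key, h]
  · intro h
    ext C
    constructor
    · rintro ⟨x, hx, rfl⟩
      rw [← key, ← h]
      exact ⟨x, hx, EA_refl A x⟩
    · rintro ⟨x, hx, rfl⟩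
      rw [← key, h]
      exact ⟨x, hx, EA_refl A x⟩

theorem satSet_sat {A B : Set ℕ} (hBA : B ⊆ A) (S : Set ℕ) :
    satSet (EA B) (satSet (EA A) S) = satSet (EA A) S := by
  ext y
  constructor
  · rintro ⟨x, ⟨w, hw, hwx⟩, hxy⟩
    exact ⟨w, hw, EA_trans hwx (hxy.imp id fun h => ⟨hBA h.1, hBA h.2⟩)⟩
  · intro h
    exact ⟨y, h, EA_refl B y⟩

theorem satStep_ran (c : Nat.Partrec.Code) (e y : ℕ) :
    (∃ n, y ∈ satStep c e n) ↔ y ∈ satSet (EA c.eval.Dom) (phi e).ran := by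
  constructor
  · rintro ⟨n, hn⟩
    obtain ⟨x, hx, h⟩ := Part.mem_bind_iff.1 hn
    refine ⟨x, ⟨_, hx⟩, ?_⟩
    by_cases hxy : x = n.unpair.2
    · simp only [hxy, decide_true, cond_true, Part.mem_some_iff] at h
      exact Or.inl (hxy.trans h.symm)
    · simp only [hxy, decide_false, cond_false, Part.mem_bind_iff, Part.mem_map_iff] at h
      obtain ⟨a, ha, b, hb, rfl⟩ := h
      exact Or.inr ⟨(PFun.mem_dom _ _).2 ⟨a, ha⟩, (PFun.mem_dom _ _).2 ⟨b, hb⟩⟩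
  · rintro ⟨x, ⟨a, ha⟩, hxy⟩
    refine ⟨Nat.pair a y, ?_⟩
    unfold satStep
    simp only [Nat.unpair_pair]
    refine Part.mem_bind_iff.2 ⟨x, ha, ?_⟩
    by_cases h : x = y
    · simp [h]
    · obtain ⟨h1, h2⟩ := hxy.resolve_left h
      obtain ⟨u, hu⟩ := (PFun.mem_dom _ _).1 h1
      obtain ⟨v, hv⟩ := (PFun.mem_dom _ _).1 h2
      simp only [h, decide_false, cond_false, Part.mem_bind_iff, Part.mem_map_iff]
      exact ⟨u, hu, v, hv, trivial⟩

/-- If `A, B` are c.e. and `B ⊆ A`, then `(E_A)⁺ ≤ (E_B)⁺`. -/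
theorem jump_EA_le_jump_EB (A B : Set ℕ) (hA : CeSet A) (hB : CeSet B)
    (hBA : B ⊆ A) :
    Reduces (FSJump (EA A)) (FSJump (EA B)) := by
  obtain ⟨a, rfl⟩ := hA
  obtain ⟨d, hd⟩ := Nat.Partrec.Code.exists_code.1 (Partrec.nat_iff.1
    ((satStep_partrec (Denumerable.ofNat Nat.Partrec.Code a)).comp Computable.unpair))
  have hran : ∀ e, (phi (Encodable.encode (Nat.Partrec.Code.curry d e))).ran =
      satSet (EA (WSet a)) (phi e).ran := by
    intro e
    ext y
    refine Iff.trans ?_ (satStep_ran (Denumerable.ofNat Nat.Partrec.Code a) e y)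
    refine exists_congr fun n => ?_
    simp only [phi, Denumerable.ofNat_encode, Nat.Partrec.Code.eval_curry, hd, Nat.unpair_pair]
  refine ⟨fun e => Encodable.encode (Nat.Partrec.Code.curry d e), ?_, ?_⟩
  · exact Computable.encode.comp
      (Nat.Partrec.Code.primrec₂_curry.to_comp.comp (Computable.const d) Computable.id)
  · intro m n
    unfold FSJump
    rw [image_eq_iff_s15, image_eq_iff_s15, hran, hran, satSet_sat hBA, satSet_sat hBA]
end

section
/- For a total computable function f : ℕ → ℕ, the following three properties are equivalent: (1) f is =^{ce}-invariant, i.e., W_e = W_{e'} implies W_{f(e)} = W_{f(e')}; (2) f is monotone, i.e., W_{e'} ⊆ W_e implies W_{f(e')} ⊆ W_{f(e)}; (3) f is inner-regular, i.e., for every e, W_{f(e)} = ⋃{W_{f(e')} : W_{e'} ⊆ W_e and W_{e'} is finite}. -/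
open Nat.Partrec in
/-- Recursion theorem for `phi`. -/
theorem phi_fixed (F : ℕ × ℕ →. ℕ) (hF : Partrec F) : ∃ c, ∀ n, phi c n = F (c, n) := by
  have h : Partrec₂ (fun (c : Code) (n : ℕ) => F (Encodable.encode c, n)) :=
    hF.comp ((Computable.encode.comp Computable.fst).pair Computable.snd)
  obtain ⟨c, hc⟩ := Code.fixed_point₂ h
  refine ⟨Encodable.encode c, fun n => ?_⟩
  simp only [phi, Denumerable.ofNat_encode, hc]

open Nat.Partrec in
theorem phi_partrec {α : Type*} [Primcodable α] {g h : α → ℕ} (hg : Computable g)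
    (hh : Computable h) : Partrec (fun a => phi (g a) (h a)) :=
  Code.eval_part.comp ((Computable.ofNat Code).comp hg) hh

theorem mem_WSet (e n : ℕ) : n ∈ WSet e ↔ (phi e n).Dom := Iff.rfl

theorem mono_of_inv (f : ℕ → ℕ) (hf : Computable f)
    (H : ∀ e e', WSet e = WSet e' → WSet (f e) = WSet (f e')) (e e' : ℕ)
    (hs : WSet e' ⊆ WSet e) : WSet (f e') ⊆ WSet (f e) := by
  intro x hx
  have h1 : Partrec (fun p : ℕ × ℕ => phi e' p.2) :=
    phi_partrec (Computable.const e') Computable.snd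
  have h2 : Partrec (fun p : ℕ × ℕ => (phi (f p.1) x).bind fun _ => phi e p.2) :=
    (phi_partrec (hf.comp Computable.fst) (Computable.const x)).bind
      (phi_partrec (Computable.const e) (Computable.snd.comp Computable.fst)).to₂
  obtain ⟨k, hk, hk'⟩ := Partrec.merge' h1 h2
  obtain ⟨c, hc⟩ := phi_fixed k hk
  have hW : ∀ n, n ∈ WSet c ↔ n ∈ WSet e' ∨ (x ∈ WSet (f c) ∧ n ∈ WSet e) := by
    intro n
    rw [mem_WSet, hc, (hk' _).2]
    simp [mem_WSet]
  by_cases hxc : x ∈ WSet (f c)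
  · rw [← H c e]
    · exact hxc
    · ext n
      rw [hW]
      exact ⟨fun h => h.elim (fun h => hs h) (fun h => h.2), fun h => Or.inr ⟨hxc, h⟩⟩
  · exfalso
    apply hxc
    rw [H c e']
    · exact hx
    · ext n
      rw [hW]
      tauto

open Nat.Partrec in
theorem fin_of_inv (f : ℕ → ℕ) (hf : Computable f)
    (H : ∀ e e', WSet e = WSet e' → WSet (f e) = WSet (f e')) (e x : ℕ)
    (hx : x ∈ WSet (f e)) :
    ∃ e', WSet e' ⊆ WSet e ∧ (WSet e').Finite ∧ x ∈ WSet (f e') := by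
  let g : ℕ × ℕ → Option ℕ := fun p => Code.evaln p.2 (Denumerable.ofNat Code (f p.1)) x
  have hg : Computable g :=
    Code.primrec_evaln.to_comp.comp
      ((Computable.snd.pair ((Computable.ofNat Code).comp (hf.comp Computable.fst))).pair
        (Computable.const x))
  let u : ℕ × ℕ → Option ℕ := fun p => Option.casesOn (g p) (some 0) (fun _ => Option.none)
  have hu : Computable u :=
    Computable.option_casesOn hg (Computable.const (some 0)) (Computable.const Option.none).to₂
  have h1 : Partrec₂ (fun (p : ℕ × ℕ) (_ : ℕ) => Part.ofOption (u p)) :=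
    (hu.ofOption.comp Computable.fst).to₂
  have h2 : Partrec (fun p : ℕ × ℕ => (phi e p.2).bind fun _ => Part.ofOption (u p)) :=
    (phi_partrec (Computable.const e) Computable.snd).bind h1
  obtain ⟨c, hc⟩ := phi_fixed _ h2
  have hW : ∀ n, n ∈ WSet c ↔ n ∈ WSet e ∧ g (c, n) = Option.none := by
    intro n
    rw [mem_WSet, hc, mem_WSet]
    rcases hgn : g (c, n) with _ | a <;> simp [u, hgn]
  have hxc : x ∈ WSet (f c) := by
    by_contra hxc
    apply hxc
    rw [H c e]
    · exact hx
    · ext n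
      rw [hW]
      refine ⟨fun h => h.1, fun h => ⟨h, ?_⟩⟩
      rw [Option.eq_none_iff_forall_not_mem]
      intro a ha
      exact hxc (Part.dom_iff_mem.2 ⟨a, Code.evaln_sound ha⟩)
  refine ⟨c, fun n hn => ((hW n).1 hn).1, ?_, hxc⟩
  obtain ⟨a, ha⟩ := Part.dom_iff_mem.1 hxc
  obtain ⟨k, hk⟩ := Code.evaln_complete.1 ha
  refine (Set.finite_lt_nat k).subset fun n hn => ?_
  by_contra hkn
  have h3 : a ∈ g (c, n) := Code.evaln_mono (not_lt.1 hkn) hk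
  rw [((hW n).1 hn).2] at h3
  simp at h3

/-- For a computable `f`, being `=^{ce}`-invariant, monotone, and inner-regular
are equivalent. -/
theorem invariant_iff_monotone_iff_innerRegular (f : ℕ → ℕ) (hf : Computable f) :
    List.TFAE
      [ ∀ e e', WSet e = WSet e' → WSet (f e) = WSet (f e'),
        ∀ e e', WSet e' ⊆ WSet e → WSet (f e') ⊆ WSet (f e),
        ∀ e, WSet (f e) =
          {x | ∃ e', WSet e' ⊆ WSet e ∧ (WSet e').Finite ∧ x ∈ WSet (f e')} ] := by
  tfae_have 1 → 3 := by
    intro H e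
    ext x
    constructor
    · exact fin_of_inv f hf H e x
    · rintro ⟨e', hs, -, hx⟩
      exact mono_of_inv f hf H e e' hs hx
  tfae_have 3 → 2 := by
    intro H e e' hs x hx
    rw [H] at hx ⊢
    obtain ⟨d, hd, hfin, hx⟩ := hx
    exact ⟨d, hd.trans hs, hfin, hx⟩
  tfae_have 2 → 1 := by
    intro H e e' h
    exact Set.Subset.antisymm (H _ _ h.le) (H _ _ h.ge)
  tfae_finish
end
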